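/- arXiv:1712.08678 — 4 statements merged into one kernel-verified Lean document; each statement's English description precedes it below -/
import Mathlib

section
/- For every p ∈ [2,∞) and every κ > 0 there exists a constant C > 0 such that for every integer N ≥ 2 (with ε = 1/N) and every f: Λ_ε → ℝ: ‖Ex f‖_{L^p(𝕋²)} ≤ C ‖f‖_{L^p(Λ_ε)} + C ε^{−κ} ‖f‖_{L^{2p−2}(Λ_ε)}^{1−1/p} ( Σ_{x,y∈Λ_ε, |x−y|=ε} ε² (f(y)−f(x))² )^{1/(2p)}, where the sum runs over nearest-neighbour pairs in Λ_ε (periodic). -/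
open scoped BigOperators ENNReal
open MeasureTheory

noncomputable section

namespace IsingKac

/-- The periodic lattice `Λ_N = {1-N, …, N}²`, realised as `(ℤ/2Nℤ)²`. -/
abbrev Lat (N : ℕ) : Type := ZMod (2*N) × ZMod (2*N)

instance latNeZero (N : ℕ) [NeZero N] : NeZero (2*N) := ⟨by have := NeZero.ne N; omega⟩

/-- The representative of `v ∈ ℤ/2Nℤ` lying in `{1-N, …, N}`. -/
def latRep (N : ℕ) (v : ZMod (2*N)) : ℤ :=
  if (v.val : ℤ) ≤ (N : ℤ) then (v.val : ℤ) else (v.val : ℤ) - 2*N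

def latRep2 (N : ℕ) (z : Lat N) : ℤ × ℤ := (latRep N z.1, latRep N z.2)

/-- The character `e_w(x) = exp(iπ w·x)`. -/
def eW (w : ℤ × ℤ) (x : ℝ × ℝ) : ℂ :=
  Complex.exp ((Real.pi : ℂ) * Complex.I * ((w.1 : ℂ) * (x.1 : ℂ) + (w.2 : ℂ) * (x.2 : ℂ)))

/-- The point `ε z ∈ Λ_ε ⊂ 𝕋²` corresponding to `z ∈ Λ_N` (with `ε = 1/N`). -/
def latPt (N : ℕ) (z : Lat N) : ℝ × ℝ :=
  ((latRep N z.1 : ℝ) / N, (latRep N z.2 : ℝ) / N)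

/-- Discrete Fourier coefficient `f̂(w) = Σ_{x ∈ Λ_ε} ε² f(x) e^{-iπ w·x}`. -/
def dFT (N : ℕ) [NeZero N] (f : Lat N → ℂ) (w : ℤ × ℤ) : ℂ :=
  ∑ z : Lat N, ((N : ℂ)^2)⁻¹ * f z * (starRingEnd ℂ) (eW w (latPt N z))

/-- The extension operator `(Ex f)(x) = (1/4) Σ_{w ∈ Λ_N} f̂(w) e^{iπ w·x}` for `x ∈ 𝕋²`. -/
def Ex (N : ℕ) [NeZero N] (f : Lat N → ℂ) (x : ℝ × ℝ) : ℂ :=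
  (1/4 : ℂ) * ∑ z : Lat N, dFT N f (latRep2 N z) * eW (latRep2 N z) x

/-- Discrete `L^p` norm on `Λ_ε`, `p ∈ [1,∞]`. -/
def dLp (N : ℕ) [NeZero N] (p : ℝ≥0∞) {E : Type*} [NormedAddCommGroup E]
    (f : Lat N → E) : ℝ :=
  if p = ∞ then ⨆ z : Lat N, ‖f z‖
  else (∑ z : Lat N, ((N : ℝ)^2)⁻¹ * ‖f z‖ ^ p.toReal) ^ (1/p.toReal)

/-- Fundamental domain of the torus `𝕋² = [-1,1]²`. -/
def box : Set (ℝ × ℝ) := Set.Icc (-1 : ℝ) 1 ×ˢ Set.Icc (-1 : ℝ) 1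

/-- `L^p(𝕋²)` norm, `p ∈ [1,∞]`. -/
def cLp (p : ℝ≥0∞) {E : Type*} [NormedAddCommGroup E] (g : ℝ × ℝ → E) : ℝ≥0∞ :=
  eLpNorm g p (volume.restrict box)

/-- Euclidean norm on `ℝ²`. -/
def enorm2 (r : ℝ × ℝ) : ℝ := Real.sqrt (r.1^2 + r.2^2)

/-- A Littlewood–Paley partition of unity `(χ̃, χ)` on `ℝ²`. -/
structure LPpartition : Type where
  chit : ℝ × ℝ → ℝ
  chi : ℝ × ℝ → ℝ
  cont_t : Continuous chit
  cont : Continuous chi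
  mem_t : ∀ r, chit r ∈ Set.Icc (0:ℝ) 1
  mem : ∀ r, chi r ∈ Set.Icc (0:ℝ) 1
  supp_t : ∀ r : ℝ × ℝ, 4/3 < enorm2 r → chit r = 0
  supp : ∀ r : ℝ × ℝ, enorm2 r < 3/4 ∨ 8/3 < enorm2 r → chi r = 0
  partition : ∀ r : ℝ × ℝ, chit r + ∑' k : ℕ, chi ((2:ℝ)^(-(k:ℤ)) • r) = 1

/-- `χ_k`, for `k ≥ -1`. -/
def LPchi (P : LPpartition) (k : ℤ) : ℝ × ℝ → ℝ :=
  if k = -1 then P.chit else fun r => P.chi ((2:ℝ)^(-k) • r)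

/-- The Littlewood–Paley block `δ_k (Ex f)` of (the extension of) a lattice function. -/
def dBlock (N : ℕ) [NeZero N] (P : LPpartition) (k : ℤ) (f : Lat N → ℂ) (x : ℝ × ℝ) : ℂ :=
  (1/4 : ℂ) * ∑ z : Lat N,
    ((LPchi P k ((latRep N z.1 : ℝ), (latRep N z.2 : ℝ)) : ℝ) : ℂ) *
      dFT N f (latRep2 N z) * eW (latRep2 N z) x

/-- Discrete Besov norm `‖f‖_{B^ν_{p,q}(Λ_ε)}`. -/
def dBesov (N : ℕ) [NeZero N] (P : LPpartition) (ν : ℝ) (p q : ℝ≥0∞) (f : Lat N → ℂ) : ℝ :=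
  if q = ∞ then
    ⨆ k : ℕ, (2:ℝ)^(ν * ((k:ℝ) - 1)) * dLp N p (fun z => dBlock N P ((k:ℤ)-1) f (latPt N z))
  else
    (∑' k : ℕ, ((2:ℝ)^(ν * ((k:ℝ) - 1)) *
      dLp N p (fun z => dBlock N P ((k:ℤ)-1) f (latPt N z))) ^ q.toReal) ^ (1/q.toReal)

/-- The `C^{-ν}` (Besov–Hölder) norm of the extension `Ex f`:
`sup_{k ≥ -1} 2^{-νk} ‖δ_k (Ex f)‖_{L^∞(𝕋²)}`. -/
def holderNeg (N : ℕ) [NeZero N] (P : LPpartition) (ν : ℝ) (f : Lat N → ℂ) : ℝ :=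
  ⨆ k : ℕ, (2:ℝ)^(-ν * ((k:ℝ) - 1)) * ⨆ x : ℝ × ℝ, ‖dBlock N P ((k:ℤ)-1) f x‖

/-- Spin values. -/
def spin (s : Bool) : ℝ := if s then 1 else -1

/-- Hamiltonian `H(σ) = (β/2) Σ_{x,y} k(x-y) σ_x σ_y + b Σ_x σ_x`. -/
def hamil (N : ℕ) [NeZero N] (kk : Lat N → ℝ) (β b : ℝ) (σ : Lat N → ℝ) : ℝ :=
  β/2 * ∑ x : Lat N, ∑ y : Lat N, kk (x - y) * σ x * σ y + b * ∑ x : Lat N, σ x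

/-- Gibbs expectation `E^γ_{β,b}[F]`. -/
def gibbsE (N : ℕ) [NeZero N] (kk : Lat N → ℝ) (β b : ℝ) (F : (Lat N → ℝ) → ℝ) : ℝ :=
  (∑ s : Lat N → Bool, Real.exp (hamil N kk β b (fun x => spin (s x))) * F (fun x => spin (s x))) /
  (∑ s : Lat N → Bool, Real.exp (hamil N kk β b (fun x => spin (s x))))

/-- The profile `𝔎 : ℝ² → [0,1]`, twice differentiable, radial, supported in `B(0,3)`,
not identically zero. -/
structure KacProfile : Type where
  f : ℝ × ℝ → ℝ
  smooth : ContDiff ℝ 2 f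
  mem : ∀ x, f x ∈ Set.Icc (0:ℝ) 1
  radial : ∀ x y : ℝ × ℝ, enorm2 x = enorm2 y → f x = f y
  supp : ∀ x : ℝ × ℝ, 3 < enorm2 x → f x = 0
  nontriv : ∃ x, f x ≠ 0

/-- The Kac kernel `k_γ(z) = c γ² 𝔎(γ·z)` (shortest periodic representative), `k_γ(0)=0`. -/
def kGamma (𝔎 : KacProfile) (N : ℕ) (c γ : ℝ) (z : Lat N) : ℝ :=
  if z = 0 then 0 else c * γ^2 * 𝔎.f (γ * (latRep N z.1 : ℝ), γ * (latRep N z.2 : ℝ))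

/-- `γ = N^{-1/2}`, so that `γ² = ε = 1/N`. -/
def gam (N : ℕ) : ℝ := Real.sqrt ((N : ℝ)⁻¹)

/-- Fourier transform `K̂_γ(ω) = Σ_z k_γ(z) e^{-iπ ω·(εz)}` of the macroscopic kernel
(real, since the kernel is even). -/
def kHat (N : ℕ) [NeZero N] (kk : Lat N → ℝ) (ω : ℤ × ℤ) : ℝ :=
  ∑ z : Lat N, kk z *
    Real.cos (Real.pi * ((ω.1 : ℝ) * (latRep N z.1 : ℝ) / N + (ω.2 : ℝ) * (latRep N z.2 : ℝ) / N))

/-- The renormalisation constant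
`𝔠_γ = (1/4) Σ_{ω ∈ Λ_N \ {0}} |K̂_γ(ω)|² / (γ^{-2} (1-K̂_γ(ω)))`. -/
def cGamma (N : ℕ) [NeZero N] (kk : Lat N → ℝ) (γ : ℝ) : ℝ :=
  (1/4) * ∑ z : Lat N, if z = (0 : Lat N) then 0 else
    (kHat N kk (latRep2 N z))^2 / ((γ^2)⁻¹ * (1 - kHat N kk (latRep2 N z)))

/-- Critical inverse temperature `β = 1 + γ²(𝔠_γ + A)`. -/
def betaCrit (𝔎 : KacProfile) (N : ℕ) [NeZero N] (c A : ℝ) : ℝ :=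
  1 + (gam N)^2 * (cGamma N (kGamma 𝔎 N c (gam N)) (gam N) + A)

/-- The fluctuation field `X_γ(x) = γ^{-1} Σ_z k_γ(ε^{-1}x - z) σ_z`, as a function on `Λ_N`. -/
def fluct (N : ℕ) [NeZero N] (kk : Lat N → ℝ) (γ : ℝ) (σ : Lat N → ℝ) (z : Lat N) : ℝ :=
  γ⁻¹ * ∑ y : Lat N, kk (z - y) * σ y

/-- The rescaled step field `γ^{-1} σ_{⌊ε^{-1}x⌋}` on the torus (without the `γ^{-1}`). -/
def stepField (N : ℕ) (σ : Lat N → ℝ) (x : ℝ × ℝ) : ℝ :=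
  σ (((⌊(N : ℝ) * x.1⌋ : ℤ) : ZMod (2*N)), ((⌊(N : ℝ) * x.2⌋ : ℤ) : ZMod (2*N)))

/-- Fourier coefficient on the torus: `ĝ(ω) = ∫_{𝕋²} g(x) e^{-iπω·x} dx`. -/
def cFT (g : ℝ × ℝ → ℂ) (ω : ℤ × ℤ) : ℂ :=
  ∫ x in box, g x * (starRingEnd ℂ) (eW ω x)


/-! ### Additional definitions -/

/-- Nearest-neighbour Dirichlet sum `Σ_{x,y ∈ Λ_ε, |x-y|=ε} ε² (f(y)-f(x))²`. -/
def nnSum (N : ℕ) [NeZero N] (f : Lat N → ℝ) : ℝ :=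
  ∑ x : Lat N, ((N : ℝ)^2)⁻¹ *
    ((f (x + (1, 0)) - f x)^2 + (f (x + (0, 1)) - f x)^2 +
     (f (x - (1, 0)) - f x)^2 + (f (x - (0, 1)) - f x)^2)

/-- The `d`-dimensional periodic lattice `Λ_N^d`. -/
abbrev LatD (d N : ℕ) : Type := Fin d → ZMod (2*N)

/-- Discrete `L^p` norm on `Λ_ε^d`, `p ∈ [1,∞]`. -/
def dLpD (d N : ℕ) [NeZero N] (p : ℝ≥0∞) (f : LatD d N → ℂ) : ℝ :=
  if p = ∞ then ⨆ z : LatD d N, ‖f z‖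
  else (∑ z : LatD d N, ((N : ℝ)^d)⁻¹ * ‖f z‖ ^ p.toReal) ^ (1/p.toReal)

/-- `Σ_{w ∈ Λ_N^d} χ(λ w) e_w`, evaluated at the lattice point `ε z ∈ Λ_ε^d`. -/
def gLam (d N : ℕ) [NeZero N] (χ : (Fin d → ℝ) → ℝ) (lam : ℝ) (z : LatD d N) : ℂ :=
  ∑ w : LatD d N, ((χ (fun i => lam * (latRep N (w i) : ℝ)) : ℝ) : ℂ) *
    Complex.exp ((Real.pi : ℂ) * Complex.I *
      ((∑ i : Fin d, (latRep N (w i) : ℝ) * ((latRep N (z i) : ℝ) / N) : ℝ) : ℂ))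

/-- Second partial derivative of `φ` in directions `v, w`. -/
def pd2 (φ : ℝ × ℝ → ℝ) (v w : ℝ × ℝ) : ℝ × ℝ → ℝ :=
  fun x => fderiv ℝ (fun y => fderiv ℝ φ y v) x w

/-- `max_{i,j ∈ {1,2}} ‖∂_i ∂_j φ‖_{L^∞}`. -/
def secondDerivBound (φ : ℝ × ℝ → ℝ) : ℝ :=
  max (max (⨆ x : ℝ × ℝ, |pd2 φ (1,0) (1,0) x|) (⨆ x : ℝ × ℝ, |pd2 φ (1,0) (0,1) x|))
      (max (⨆ x : ℝ × ℝ, |pd2 φ (0,1) (1,0) x|) (⨆ x : ℝ × ℝ, |pd2 φ (0,1) (0,1) x|))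

/-- The Littlewood–Paley block `δ_k g` of a function on the torus. -/
def cBlock (P : LPpartition) (k : ℤ) (g : ℝ × ℝ → ℂ) (x : ℝ × ℝ) : ℂ :=
  (1/4 : ℂ) * ∑' ω : ℤ × ℤ, ((LPchi P k ((ω.1 : ℝ), (ω.2 : ℝ)) : ℝ) : ℂ) * cFT g ω * eW ω x

/-- Besov norm `‖g‖_{B^ν_{1,1}(𝕋²)} = Σ_{k ≥ -1} 2^{νk} ‖δ_k g‖_{L¹(𝕋²)}`. -/
def cBesov11 (P : LPpartition) (ν : ℝ) (g : ℝ × ℝ → ℂ) : ℝ :=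
  ∑' k : ℕ, (2:ℝ) ^ (ν * ((k:ℝ) - 1)) * ∫ x in box, ‖cBlock P ((k:ℤ)-1) g x‖

open scoped NNReal


/-! ### Proof -/

lemma latRep_cast (N : ℕ) [NeZero N] (v : ZMod (2*N)) : ((latRep N v : ℤ) : ZMod (2*N)) = v := by
  unfold latRep
  split_ifs
  · simp
  · have : ((2 * N : ℕ) : ZMod (2*N)) = 0 := ZMod.natCast_self _
    push_cast at this ⊢
    simp [this]

lemma latRep_lower (N : ℕ) [NeZero N] (v : ZMod (2*N)) : 1 - (N : ℤ) ≤ latRep N v := by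
  have := NeZero.pos N
  unfold latRep
  split_ifs <;> omega

lemma latRep_upper (N : ℕ) [NeZero N] (v : ZMod (2*N)) : latRep N v ≤ N := by
  have := ZMod.val_lt v
  unfold latRep
  split_ifs <;> omega

lemma latRep_intCast (N : ℕ) [NeZero N] (j : ℤ) (h1 : 1 - (N : ℤ) ≤ j) (h2 : j ≤ N) :
    latRep N (j : ZMod (2*N)) = j := by
  have hc := latRep_cast N (j : ZMod (2*N))
  rw [ZMod.intCast_eq_intCast_iff_dvd_sub] at hc
  obtain ⟨c, hc⟩ := hc
  have a1 := latRep_lower N (j : ZMod (2*N))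
  have a2 := latRep_upper N (j : ZMod (2*N))
  have hN := NeZero.pos N
  push_cast at hc
  have hc0 : c = 0 := by
    have : -1 < c := by
      by_contra hh
      nlinarith
    have : c < 1 := by
      by_contra hh
      nlinarith
    omega
  subst hc0
  omega

/-- standard character -/
abbrev psi (N : ℕ) [NeZero N] : AddChar (ZMod (2*N)) ℂ := ZMod.stdAddChar

lemma psi_int (N : ℕ) [NeZero N] (j : ℤ) :
    psi N (j : ZMod (2*N)) = Complex.exp (Complex.I * ((Real.pi * j / N : ℝ) : ℂ)) := by
  have hN : (N : ℂ) ≠ 0 := by exact_mod_cast NeZero.ne N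
  rw [psi, ZMod.stdAddChar_coe]
  congr 1
  push_cast
  field_simp

lemma psi_conj (N : ℕ) [NeZero N] (a : ZMod (2*N)) : (starRingEnd ℂ) (psi N a) = psi N (-a) := by
  rw [AddChar.map_neg_eq_conj]

lemma psi_norm (N : ℕ) [NeZero N] (a : ZMod (2*N)) : ‖psi N a‖ = 1 := by
  simp

/-- The Fourier coefficient on `ZMod (2N)`. -/
def hatc (N : ℕ) [NeZero N] (h : ZMod (2*N) → ℂ) (w : ZMod (2*N)) : ℂ :=
  ∑ b, h b * psi N (-(w * b))

/-- kernel of a Fourier multiplier -/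
def ker (N : ℕ) [NeZero N] (m : ZMod (2*N) → ℂ) (a : ZMod (2*N)) : ℂ :=
  (2 * (N : ℂ))⁻¹ * ∑ w, m w * psi N (w * a)

/-- Fourier multiplier -/
def mul (N : ℕ) [NeZero N] (m : ZMod (2*N) → ℂ) (h : ZMod (2*N) → ℂ) (a : ZMod (2*N)) : ℂ :=
  ∑ b, ker N m (a - b) * h b

lemma mul_eq (N : ℕ) [NeZero N] (m h : ZMod (2*N) → ℂ) (a : ZMod (2*N)) :
    mul N m h a = (2 * (N : ℂ))⁻¹ * ∑ w, m w * hatc N h w * psi N (w * a) := by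
  unfold mul ker hatc
  simp_rw [Finset.mul_sum, Finset.sum_mul]
  rw [Finset.sum_comm]
  simp_rw [Finset.mul_sum]
  refine Finset.sum_congr rfl fun w _ => Finset.sum_congr rfl fun b _ => ?_
  rw [show w * (a - b) = w * a + -(w*b) by ring, AddChar.map_add_eq_mul]
  ring

lemma psi_sum (N : ℕ) [NeZero N] (b : ZMod (2*N)) :
    ∑ x, psi N (x * b) = if b = 0 then (2 * N : ℂ) else 0 := by
  rw [AddChar.sum_mulShift b (ZMod.isPrimitive_stdAddChar (2*N))]
  simp

lemma parseval (N : ℕ) [NeZero N] (c : ZMod (2*N) → ℂ) :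
    ∑ a, ‖∑ w, c w * psi N (w * a)‖^2 = 2 * N * ∑ w, ‖c w‖^2 := by
  have key : ∑ a, (∑ w, c w * psi N (w * a)) * (starRingEnd ℂ) (∑ w, c w * psi N (w * a))
      = 2 * N * ∑ w, c w * (starRingEnd ℂ) (c w) := by
    simp_rw [map_sum, map_mul, psi_conj, Finset.sum_mul_sum]
    rw [Finset.sum_comm]
    rw [Finset.mul_sum]
    refine Finset.sum_congr rfl fun w _ => ?_
    rw [Finset.sum_comm]
    have : ∀ v, ∑ a, c w * psi N (w * a) * ((starRingEnd ℂ) (c v) * psi N (-(v * a)))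
        = c w * (starRingEnd ℂ) (c v) * if w - v = 0 then (2 * N : ℂ) else 0 := by
      intro v
      rw [← psi_sum, Finset.mul_sum]
      refine Finset.sum_congr rfl fun a _ => ?_
      rw [show a * (w - v) = w * a + -(v * a) by ring, AddChar.map_add_eq_mul]
      ring
    simp_rw [this, sub_eq_zero]
    simp
    ring
  simp_rw [Complex.mul_conj, Complex.normSq_eq_norm_sq] at key
  exact_mod_cast key

lemma mul_mono (N : ℕ) [NeZero N] (m m' h : ZMod (2*N) → ℂ) (hm : ∀ w, ‖m w‖ ≤ ‖m' w‖) :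
    ∑ a, ‖mul N m h a‖^2 ≤ ∑ a, ‖mul N m' h a‖^2 := by
  simp_rw [mul_eq, norm_mul, mul_pow, ← Finset.mul_sum, parseval]
  gcongr with w
  simp_rw [norm_mul]
  gcongr
  exact hm w

lemma mul_psi (N : ℕ) [NeZero N] (h : ZMod (2*N) → ℂ) (u a : ZMod (2*N)) :
    mul N (fun w => psi N (w * u)) h a = h (a + u) := by
  have hN : (N : ℂ) ≠ 0 := by exact_mod_cast NeZero.ne N
  have : ∀ b, ker N (fun w => psi N (w * u)) (a - b) = if b = a + u then 1 else 0 := by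
    intro b
    unfold ker
    simp_rw [← AddChar.map_add_eq_mul, ← mul_add]
    rw [psi_sum]
    have : u + (a - b) = 0 ↔ b = a + u := by
      constructor
      · intro h; linear_combination -h
      · intro h; rw [h]; ring
    simp_rw [this]
    split_ifs
    · field_simp
    · simp
  unfold mul
  simp_rw [this]
  simp

lemma mul_one' (N : ℕ) [NeZero N] (h : ZMod (2*N) → ℂ) (a : ZMod (2*N)) :
    mul N (fun _ => 1) h a = h a := by
  have := mul_psi N h 0 a
  simpa using this

lemma mul_sub' (N : ℕ) [NeZero N] (m m' h : ZMod (2*N) → ℂ) (a : ZMod (2*N)) :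
    mul N (fun w => m w - m' w) h a = mul N m h a - mul N m' h a := by
  simp_rw [mul_eq, ← mul_sub, ← Finset.sum_sub_distrib, sub_mul]

/-- the translation multiplier -/
def mt (N : ℕ) (t : ℝ) (w : ZMod (2*N)) : ℂ :=
  Complex.exp (Complex.I * ((Real.pi * (latRep N w) / N * t : ℝ) : ℂ))

lemma mt_norm (N : ℕ) (t : ℝ) (w : ZMod (2*N)) : ‖mt N t w‖ = 1 := by
  unfold mt
  rw [Complex.norm_exp_I_mul_ofReal]

lemma abs_sin_mono {x y : ℝ} (h : |x| ≤ |y|) (hy : |y| ≤ Real.pi / 2) :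
    |Real.sin x| ≤ |Real.sin y| := by
  have hp := Real.pi_pos
  have key : ∀ u : ℝ, |Real.sin u| = |Real.sin (|u|)| := by
    intro u
    rcases abs_cases u with ⟨hu, _⟩ | ⟨hu, _⟩ <;> rw [hu]
    rw [Real.sin_neg, abs_neg]
  rw [key x, key y]
  rw [abs_of_nonneg (Real.sin_nonneg_of_nonneg_of_le_pi (abs_nonneg x) (by linarith)),
    abs_of_nonneg (Real.sin_nonneg_of_nonneg_of_le_pi (abs_nonneg y) (by linarith))]
  exact Real.sin_le_sin_of_le_of_le_pi_div_two (by linarith [abs_nonneg x]) hy h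

lemma mt_sub_one (N : ℕ) [NeZero N] (t : ℝ) (ht0 : 0 ≤ t) (ht1 : t ≤ 1) (w : ZMod (2*N)) :
    ‖mt N t w - 1‖ ≤ ‖psi N w - 1‖ := by
  have hN : (0:ℝ) < N := by exact_mod_cast NeZero.pos N
  have hp := Real.pi_pos
  nth_rw 2 [← latRep_cast N w]
  rw [psi_int, mt, Complex.norm_exp_I_mul_ofReal_sub_one, Complex.norm_exp_I_mul_ofReal_sub_one]
  simp only [norm_mul, Real.norm_eq_abs]
  refine mul_le_mul_of_nonneg_left ?_ (abs_nonneg 2)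
  have h1 : (1:ℝ) - N ≤ latRep N w := by exact_mod_cast latRep_lower N w
  have h2 : (latRep N w : ℝ) ≤ N := by exact_mod_cast latRep_upper N w
  have h3 : |(latRep N w : ℝ)| ≤ N := abs_le.mpr ⟨by linarith, h2⟩
  apply abs_sin_mono
  · rw [abs_div, abs_div, abs_mul, abs_of_nonneg ht0]
    gcongr
    exact mul_le_of_le_one_right (abs_nonneg _) ht1
  · rw [abs_div, abs_div, abs_mul, abs_of_pos hp, abs_of_pos hN, abs_two]
    gcongr
    rw [div_le_iff₀ hN]
    gcongr

lemma l2_contr (N : ℕ) [NeZero N] (t : ℝ) (h : ZMod (2*N) → ℂ) :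
    ∑ a, ‖mul N (mt N t) h a‖^2 ≤ ∑ a, ‖h a‖^2 := by
  have := mul_mono N (mt N t) (fun _ => 1) h (fun w => by simp [mt_norm])
  simpa only [mul_one'] using this

lemma l2_diff (N : ℕ) [NeZero N] (t : ℝ) (ht0 : 0 ≤ t) (ht1 : t ≤ 1) (h : ZMod (2*N) → ℂ) :
    ∑ a, ‖mul N (mt N t) h a - h a‖^2 ≤ ∑ a, ‖h (a + 1) - h a‖^2 := by
  have := mul_mono N (fun w => mt N t w - 1) (fun w => psi N (w * 1) - 1) h
    (fun w => by rw [mul_one]; exact mt_sub_one N t ht0 ht1 w)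
  simpa only [mul_sub', mul_one', mul_psi] using this


lemma sum_latRep (N : ℕ) [NeZero N] (F : ℤ → ℂ) :
    ∑ w : ZMod (2*N), F (latRep N w) = ∑ j ∈ Finset.range (2*N), F (1 - (N:ℤ) + j) := by
  refine Finset.sum_bij' (fun w _ => (latRep N w + N - 1).toNat)
    (fun j _ => ((1 - (N:ℤ) + j : ℤ) : ZMod (2*N))) ?_ ?_ ?_ ?_ ?_
  · intro w _
    have := latRep_lower N w
    have := latRep_upper N w
    have := NeZero.pos N
    rw [Finset.mem_range]
    omega
  · intro j _
    exact Finset.mem_univ _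
  · intro w _
    have h1 := latRep_lower N w
    have : (1 - (N:ℤ) + ((latRep N w + N - 1).toNat : ℕ)) = latRep N w := by omega
    rw [this, latRep_cast]
  · intro j hj
    rw [Finset.mem_range] at hj
    rw [latRep_intCast _ _ (by omega) (by omega)]
    omega
  · intro w _
    have h1 := latRep_lower N w
    congr 1
    omega

lemma ker_eq (N : ℕ) [NeZero N] (t : ℝ) (a : ZMod (2*N)) :
    ker N (mt N t) a = (2 * (N : ℂ))⁻¹ *
      ∑ w : ZMod (2*N), Complex.exp (Complex.I * ((Real.pi * (t + a.val) / N * latRep N w : ℝ) : ℂ)) := by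
  have hN : (N : ℂ) ≠ 0 := by exact_mod_cast NeZero.ne N
  unfold ker mt
  congr 1
  refine Finset.sum_congr rfl fun w _ => ?_
  have : w * a = ((latRep N w * (a.val : ℤ) : ℤ) : ZMod (2*N)) := by
    push_cast
    rw [latRep_cast]
    simp
  rw [this, psi_int, ← Complex.exp_add]
  congr 1
  push_cast
  field_simp

lemma ker_le_one (N : ℕ) [NeZero N] (t : ℝ) (a : ZMod (2*N)) : ‖ker N (mt N t) a‖ ≤ 1 := by
  have hN : (0 : ℝ) < N := by exact_mod_cast NeZero.pos N
  rw [ker_eq, norm_mul]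
  have h : ‖∑ w : ZMod (2*N),
      Complex.exp (Complex.I * ((Real.pi * (t + a.val) / N * latRep N w : ℝ) : ℂ))‖ ≤ 2 * N := by
    refine (norm_sum_le _ _).trans ?_
    simp_rw [Complex.norm_exp_I_mul_ofReal]
    simp
  have h2 : ‖(2 * (N : ℂ))⁻¹‖ = (2 * (N:ℝ))⁻¹ := by simp
  rw [h2]
  calc _ ≤ (2 * (N:ℝ))⁻¹ * (2 * N) := by gcongr
    _ = 1 := by field_simp

lemma sin_lower (N : ℕ) [NeZero N] (s r : ℝ) (hr : 0 ≤ r) (h1 : r ≤ s) (h2 : r ≤ 2 * N - s) :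
    r / N ≤ Real.sin (Real.pi * s / N / 2) := by
  have hN : (0 : ℝ) < N := by exact_mod_cast NeZero.pos N
  have hp := Real.pi_pos
  rcases le_total s N with h | h
  · have := Real.mul_le_sin (x := Real.pi * s / N / 2) (by have : 0 ≤ s := by linarith
                                                           positivity)
      (by gcongr; rw [div_le_iff₀ hN]; gcongr)
    refine le_trans ?_ this
    have e : 2 / Real.pi * (Real.pi * s / N / 2) = s / N := by field_simp
    rw [e]
    gcongr
  · have e0 : Real.pi - Real.pi * s / N / 2 = Real.pi * (2 * N - s) / N / 2 := by
      field_simp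
    rw [← Real.sin_pi_sub, e0]
    have := Real.mul_le_sin (x := Real.pi * (2 * N - s) / N / 2)
      (by have : 0 ≤ 2 * N - s := by linarith
          positivity)
      (by gcongr; rw [div_le_iff₀ hN]; gcongr; linarith)
    refine le_trans ?_ this
    have e : 2 / Real.pi * (Real.pi * (2 * N - s) / N / 2) = (2 * N - s) / N := by field_simp
    rw [e]
    gcongr

lemma ker_le_inv (N : ℕ) [NeZero N] (t : ℝ) (a : ZMod (2*N)) (r : ℝ) (hr : 0 < r)
    (h1 : r ≤ t + a.val) (h2 : r ≤ 2 * N - (t + a.val)) :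
    ‖ker N (mt N t) a‖ ≤ 1 / (2 * r) := by
  have hN : (0 : ℝ) < N := by exact_mod_cast NeZero.pos N
  rw [ker_eq, norm_mul]
  set θ : ℝ := Real.pi * (t + a.val) / N with hθ
  rw [sum_latRep N (fun j => Complex.exp (Complex.I * ((θ * j : ℝ) : ℂ)))]
  set z := Complex.exp (Complex.I * (θ : ℂ)) with hz
  have e : ∀ j : ℕ, Complex.exp (Complex.I * ((θ * ((1 - (N:ℤ) + j : ℤ) : ℝ) : ℝ) : ℂ))
      = Complex.exp (Complex.I * ((θ * (1 - N) : ℝ) : ℂ)) * z ^ j := by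
    intro j
    rw [hz, ← Complex.exp_nat_mul, ← Complex.exp_add]
    congr 1
    push_cast
    ring
  simp_rw [e, ← Finset.mul_sum]
  rw [norm_mul, Complex.norm_exp_I_mul_ofReal, one_mul]
  have h3 : ‖(2 * (N : ℂ))⁻¹‖ = (2 * (N:ℝ))⁻¹ := by simp
  rw [h3]
  have hg := congrArg norm (geom_sum_mul z (2*N))
  rw [norm_mul] at hg
  have hz1 : ‖z‖ = 1 := Complex.norm_exp_I_mul_ofReal θ
  have hle : ‖z ^ (2*N) - 1‖ ≤ 2 := by
    refine (norm_sub_le _ _).trans ?_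
    rw [norm_pow, hz1]
    norm_num
  have hlow : 2 * (r / N) ≤ ‖z - 1‖ := by
    rw [hz, Complex.norm_exp_I_mul_ofReal_sub_one, norm_mul, Real.norm_eq_abs, Real.norm_eq_abs,
      abs_two]
    gcongr
    exact (sin_lower N _ r hr.le h1 h2).trans (le_abs_self _)
  rw [← hg] at hle
  have hS : ‖∑ j ∈ Finset.range (2*N), z ^ j‖ * (2 * (r / N)) ≤ 2 :=
    (mul_le_mul_of_nonneg_left hlow (norm_nonneg _)).trans hle
  generalize ‖∑ j ∈ Finset.range (2*N), z ^ j‖ = S at hS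
  rw [inv_mul_le_iff₀ (by positivity)]
  have : S ≤ N / r := by
    rw [le_div_iff₀ hr]
    have : S * (2 * (r / N)) = 2 * (S * r) / N := by ring
    rw [this, div_le_iff₀ hN] at hS
    linarith
  refine this.trans (le_of_eq ?_)
  field_simp

lemma ker_bound (N : ℕ) [NeZero N] (t : ℝ) (ht0 : 0 ≤ t) (ht1 : t ≤ 1) (a : ZMod (2*N)) :
    ‖ker N (mt N t) a‖ ≤ 1 / ((a.val : ℝ) + 1) + 1 / (2 * N - a.val) := by
  have hlt : a.val + 1 ≤ 2 * N := ZMod.val_lt a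
  have hlt' : (a.val : ℝ) + 1 ≤ 2 * N := by exact_mod_cast hlt
  have hv0 : (0:ℝ) ≤ a.val := Nat.cast_nonneg _
  by_cases h0 : a.val = 0
  · refine (ker_le_one N t a).trans ?_
    rw [h0] at hlt' ⊢
    have : (0:ℝ) ≤ 1 / (2 * N - (0:ℕ)) := by
      apply div_nonneg zero_le_one
      push_cast at hlt' ⊢
      linarith
    push_cast at this ⊢
    linarith
  by_cases h1 : a.val + 1 = 2 * N
  · refine (ker_le_one N t a).trans ?_
    have h1' : (a.val : ℝ) + 1 = 2 * N := by exact_mod_cast h1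
    have e : (2:ℝ) * N - a.val = 1 := by linarith
    rw [e]
    have : 0 ≤ 1 / ((a.val : ℝ) + 1) := by positivity
    linarith
  have ha : (1:ℝ) ≤ a.val := by exact_mod_cast Nat.one_le_iff_ne_zero.mpr h0
  have hb : (a.val : ℝ) + 2 ≤ 2 * N := by
    have : a.val + 2 ≤ 2 * N := by omega
    exact_mod_cast this
  have hk := ker_le_inv N t a
  generalize (a.val : ℝ) = v at *
  have p1 : 0 < 1 / (v + 1) := by positivity
  have p2 : 0 < 1 / (2 * N - v) := by apply div_pos one_pos; linarith
  rcases le_total (t + v) N with h | h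
  · refine (hk v (by linarith) (by linarith) (by linarith)).trans ?_
    have : 1 / (2 * v) ≤ 1 / (v + 1) := by
      apply one_div_le_one_div_of_le <;> linarith
    linarith
  · refine (hk (2 * N - 1 - v) (by linarith) (by linarith) (by linarith)).trans ?_
    have : 1 / (2 * (2 * N - 1 - v)) ≤ 1 / (2 * N - v) := by
      apply one_div_le_one_div_of_le <;> linarith
    linarith

/-- bound for the `ℓ¹` norm of the kernel -/
def LL (N : ℕ) : ℝ := 2 * (1 + Real.log (2 * N))

lemma ker_sum (N : ℕ) [NeZero N] (t : ℝ) (ht0 : 0 ≤ t) (ht1 : t ≤ 1) :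
    ∑ a, ‖ker N (mt N t) a‖ ≤ LL N := by
  have hN := NeZero.pos N
  have h1 : ∑ a, ‖ker N (mt N t) a‖ ≤
      ∑ a : ZMod (2*N), (1 / ((a.val : ℝ) + 1) + 1 / (2 * N - a.val)) :=
    Finset.sum_le_sum fun a _ => ker_bound N t ht0 ht1 a
  have h2 : ∑ a : ZMod (2*N), (1 / ((a.val : ℝ) + 1) + 1 / (2 * N - a.val))
      = ∑ j ∈ Finset.range (2*N), (1 / ((j : ℝ) + 1) + 1 / (2 * N - j)) := by
    refine Finset.sum_bij' (fun a _ => a.val) (fun j _ => (j : ZMod (2*N))) ?_ ?_ ?_ ?_ ?_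
    · intro a _
      exact Finset.mem_range.mpr (ZMod.val_lt a)
    · intro j _
      exact Finset.mem_univ _
    · intro a _
      simp
    · intro j hj
      exact ZMod.val_cast_of_lt (Finset.mem_range.mp hj)
    · intro a _
      rfl
  have h3 : ∑ j ∈ Finset.range (2*N), 1 / ((2:ℝ) * N - j)
      = ∑ j ∈ Finset.range (2*N), 1 / ((j:ℝ) + 1) := by
    rw [← Finset.sum_range_reflect]
    refine Finset.sum_congr rfl fun j hj => ?_
    have hj := Finset.mem_range.mp hj
    congr 1
    rw [Nat.sub_sub, Nat.cast_sub (by omega)]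
    push_cast
    ring
  have h4 : ∑ j ∈ Finset.range (2*N), 1 / ((j:ℝ) + 1) ≤ 1 + Real.log (2 * N) := by
    have := harmonic_le_one_add_log (2*N)
    unfold harmonic at this
    push_cast at this
    simpa [one_div] using this
  rw [h2, Finset.sum_add_distrib, h3] at h1
  unfold LL
  linarith

lemma LL_one (N : ℕ) [NeZero N] : 1 ≤ LL N := by
  have : (1:ℝ) ≤ N := by exact_mod_cast NeZero.pos N
  have := Real.log_nonneg (x := 2 * N) (by linarith)
  unfold LL
  linarith

lemma LL_le (N : ℕ) [NeZero N] (κ : ℝ) (hκ : 0 < κ) :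
    LL N ^ 2 ≤ (2 * (1 + 2 ^ (κ/2) / (κ/2)))^2 * (N:ℝ) ^ κ := by
  have hN : (1:ℝ) ≤ N := by exact_mod_cast NeZero.pos N
  have h1 : Real.log (2 * N) ≤ (2 * N : ℝ) ^ (κ/2) / (κ/2) :=
    Real.log_le_rpow_div (by positivity) (by positivity)
  rw [Real.mul_rpow (by norm_num) (by positivity)] at h1
  have h2 : 1 ≤ (N:ℝ) ^ (κ/2) := Real.one_le_rpow hN (by positivity)
  have h3 : (N:ℝ) ^ κ = ((N:ℝ) ^ (κ/2))^2 := by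
    rw [← Real.rpow_natCast, ← Real.rpow_mul (by positivity)]
    congr 1
    push_cast
    ring
  have h5 := LL_one N
  rw [h3, ← mul_pow]
  apply pow_le_pow_left₀ (by linarith)
  unfold LL
  calc _ ≤ 2 * ((N:ℝ) ^ (κ/2) + 2 ^ (κ/2) * (N:ℝ)^(κ/2) / (κ/2)) := by gcongr
    _ = _ := by ring

lemma young {G : Type*} [AddCommGroup G] [Fintype G] (K f : G → ℂ) (L : ℝ) (hL0 : 0 < L)
    (hL : ∑ y, ‖K y‖ ≤ L) (q : ℝ) (hq : 1 ≤ q) :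
    ∑ z, ‖∑ y, K (z - y) * f y‖ ^ q ≤ L ^ q * ∑ y, ‖f y‖ ^ q := by
  have hq0 : 0 < q := by linarith
  have h1 : ∀ z, ‖∑ y, K (z - y) * f y‖ ^ q ≤ L ^ (q - 1) * ∑ y, ‖K (z - y)‖ * ‖f y‖ ^ q := by
    intro z
    have e1 : ‖∑ y, K (z - y) * f y‖ ≤ ∑ y, ‖K (z - y)‖ * ‖f y‖ := by
      refine (norm_sum_le _ _).trans (le_of_eq ?_)
      simp_rw [norm_mul]
    have e2 := Real.inner_le_weight_mul_Lp_of_nonneg Finset.univ hq (fun y => ‖K (z - y)‖)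
      (fun y => ‖f y‖) (fun _ => norm_nonneg _) (fun _ => norm_nonneg _)
    have e3 : ∑ y, ‖K (z - y)‖ ≤ L := by
      exact (Equiv.sum_comp (Equiv.subLeft z) (fun y => ‖K y‖)).trans_le hL
    have hA : 0 ≤ ∑ y, ‖K (z - y)‖ * ‖f y‖ ^ q := by positivity
    have hi : q⁻¹ ≤ 1 := inv_le_one_of_one_le₀ hq
    calc ‖∑ y, K (z - y) * f y‖ ^ q
        ≤ (L ^ (1 - q⁻¹) * (∑ y, ‖K (z - y)‖ * ‖f y‖ ^ q) ^ q⁻¹) ^ q := by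
          refine Real.rpow_le_rpow (norm_nonneg _) (e1.trans (e2.trans ?_)) hq0.le
          gcongr
      _ = _ := by
          rw [Real.mul_rpow (by positivity) (by positivity), ← Real.rpow_mul hL0.le,
            ← Real.rpow_mul hA, inv_mul_cancel₀ hq0.ne', Real.rpow_one]
          congr 2
          field_simp
  calc _ ≤ ∑ z, L ^ (q - 1) * ∑ y, ‖K (z - y)‖ * ‖f y‖ ^ q := Finset.sum_le_sum fun z _ => h1 z
    _ = L ^ (q - 1) * ∑ y, (∑ z, ‖K (z - y)‖) * ‖f y‖ ^ q := by
        rw [← Finset.mul_sum, Finset.sum_comm]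
        simp_rw [Finset.sum_mul]
    _ = L ^ (q - 1) * ((∑ z, ‖K z‖) * ∑ y, ‖f y‖ ^ q) := by
        congr 1
        rw [Finset.mul_sum]
        refine Finset.sum_congr rfl fun y _ => ?_
        congr 1
        exact Equiv.sum_comp (Equiv.subRight y) (fun z => ‖K z‖)
    _ ≤ L ^ (q - 1) * (L * ∑ y, ‖f y‖ ^ q) := by gcongr
    _ = _ := by
        rw [← mul_assoc]
        congr 1
        rw [← Real.rpow_add_one hL0.ne', sub_add_cancel]

/-- shifted extension at lattice points -/
def GG (N : ℕ) [NeZero N] (t s : ℝ) (F : Lat N → ℂ) (z : Lat N) : ℂ :=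
  ∑ y : Lat N, (ker N (mt N t) (z - y).1 * ker N (mt N s) (z - y).2) * F y

lemma GG_eq (N : ℕ) [NeZero N] (t s : ℝ) (F : Lat N → ℂ) (z : Lat N) :
    GG N t s F z = mul N (mt N t) (fun a => mul N (mt N s) (fun b => F (a, b)) z.2) z.1 := by
  unfold GG mul
  rw [Fintype.sum_prod_type]
  refine Finset.sum_congr rfl fun a _ => ?_
  rw [Finset.mul_sum]
  refine Finset.sum_congr rfl fun b _ => ?_
  simp only [Prod.fst_sub, Prod.snd_sub]
  ring

lemma eW_pt (N : ℕ) [NeZero N] (z y : Lat N) :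
    eW (latRep2 N z) (latPt N y) = psi N (z.1 * y.1) * psi N (z.2 * y.2) := by
  have hN : (N : ℂ) ≠ 0 := by exact_mod_cast NeZero.ne N
  have h : ∀ a b : ZMod (2*N), a * b = ((latRep N a * latRep N b : ℤ) : ZMod (2*N)) := by
    intro a b
    push_cast
    rw [latRep_cast, latRep_cast]
  rw [h z.1, h z.2, psi_int, psi_int, ← Complex.exp_add]
  unfold eW latRep2 latPt
  congr 1
  push_cast
  field_simp

lemma eW_shift (N : ℕ) [NeZero N] (z : Lat N) (m n : ℤ) (t s : ℝ) :
    eW (latRep2 N z) ((m + t) / N, (n + s) / N) =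
      (mt N t z.1 * psi N (z.1 * m)) * (mt N s z.2 * psi N (z.2 * n)) := by
  have hN : (N : ℂ) ≠ 0 := by exact_mod_cast NeZero.ne N
  have h : ∀ (a : ZMod (2*N)) (b : ℤ), a * b = ((latRep N a * b : ℤ) : ZMod (2*N)) := by
    intro a b
    push_cast
    rw [latRep_cast]
  rw [h z.1, h z.2, psi_int, psi_int, mt, mt, ← Complex.exp_add, ← Complex.exp_add,
    ← Complex.exp_add]
  unfold eW latRep2
  congr 1
  push_cast
  field_simp
  ring

lemma Ex_eq (N : ℕ) [NeZero N] (F : Lat N → ℂ) (m n : ℤ) (t s : ℝ) :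
    Ex N F ((m + t) / N, (n + s) / N) = GG N t s F ((m : ZMod (2*N)), (n : ZMod (2*N))) := by
  have hN : (N : ℂ) ≠ 0 := by exact_mod_cast NeZero.ne N
  unfold Ex dFT GG
  simp_rw [eW_pt, eW_shift, map_mul, psi_conj, Finset.sum_mul, Finset.mul_sum]
  rw [Finset.sum_comm]
  refine Finset.sum_congr rfl fun y _ => ?_
  unfold ker
  rw [mul_mul_mul_comm, Finset.sum_mul_sum, Finset.mul_sum, Finset.sum_mul, Fintype.sum_prod_type]
  refine Finset.sum_congr rfl fun a _ => ?_
  rw [Finset.mul_sum, Finset.sum_mul]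
  refine Finset.sum_congr rfl fun b _ => ?_
  simp only [Prod.fst_sub, Prod.snd_sub]
  rw [show a * ((m : ZMod (2*N)) - y.1) = a * m + -(a * y.1) by ring,
    show b * ((n : ZMod (2*N)) - y.2) = b * n + -(b * y.2) by ring,
    AddChar.map_add_eq_mul, AddChar.map_add_eq_mul]
  field_simp
  ring

lemma GG_lq (N : ℕ) [NeZero N] (t s : ℝ) (ht0 : 0 ≤ t) (ht1 : t ≤ 1) (hs0 : 0 ≤ s) (hs1 : s ≤ 1)
    (F : Lat N → ℂ) (q : ℝ) (hq : 1 ≤ q) :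
    ∑ z, ‖GG N t s F z‖ ^ q ≤ (LL N ^ 2) ^ q * ∑ z, ‖F z‖ ^ q := by
  have h1 := LL_one N
  refine young (fun y : Lat N => ker N (mt N t) y.1 * ker N (mt N s) y.2) F (LL N ^ 2)
    (by positivity) ?_ q hq
  rw [Fintype.sum_prod_type]
  simp_rw [norm_mul]
  rw [← Finset.sum_mul_sum, sq]
  exact mul_le_mul (ker_sum N t ht0 ht1) (ker_sum N s hs0 hs1) (by positivity) (by linarith)

lemma mul_subh (N : ℕ) [NeZero N] (m h h' : ZMod (2*N) → ℂ) (a : ZMod (2*N)) :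
    mul N m (fun b => h b - h' b) a = mul N m h a - mul N m h' a := by
  unfold mul
  rw [← Finset.sum_sub_distrib]
  simp_rw [mul_sub]

lemma GG_l2 (N : ℕ) [NeZero N] (t s : ℝ) (ht0 : 0 ≤ t) (ht1 : t ≤ 1) (hs0 : 0 ≤ s) (hs1 : s ≤ 1)
    (F : Lat N → ℂ) :
    ∑ z, ‖GG N t s F z - F z‖ ^ 2 ≤
      2 * ∑ z, (‖F (z + (1, 0)) - F z‖ ^ 2 + ‖F (z + (0, 1)) - F z‖ ^ 2) := by
  have e : ∀ z : Lat N, GG N t s F z - F z =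
      mul N (mt N t) (fun a => mul N (mt N s) (fun b => F (a, b)) z.2 - F (a, z.2)) z.1
      + (mul N (mt N t) (fun a => F (a, z.2)) z.1 - F z) := by
    intro z
    rw [mul_subh, GG_eq]
    ring
  have h1 : ∑ z : Lat N, ‖mul N (mt N t)
      (fun a => mul N (mt N s) (fun b => F (a, b)) z.2 - F (a, z.2)) z.1‖ ^ 2
      ≤ ∑ z : Lat N, ‖F (z + (0, 1)) - F z‖ ^ 2 := by
    rw [Fintype.sum_prod_type_right, Fintype.sum_prod_type]
    calc _ ≤ ∑ y, ∑ a, ‖mul N (mt N s) (fun b => F (a, b)) y - F (a, y)‖ ^ 2 :=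
          Finset.sum_le_sum fun y _ => l2_contr N t _
      _ ≤ _ := by
          rw [Finset.sum_comm]
          refine Finset.sum_le_sum fun a _ => ?_
          have := l2_diff N s hs0 hs1 (fun b => F (a, b))
          simpa using this
  have h2 : ∑ z : Lat N, ‖mul N (mt N t) (fun a => F (a, z.2)) z.1 - F z‖ ^ 2
      ≤ ∑ z : Lat N, ‖F (z + (1, 0)) - F z‖ ^ 2 := by
    rw [Fintype.sum_prod_type_right, Fintype.sum_prod_type_right]
    refine Finset.sum_le_sum fun y _ => ?_
    have := l2_diff N t ht0 ht1 (fun a => F (a, y))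
    simpa using this
  calc _ ≤ ∑ z : Lat N, (2 * ‖mul N (mt N t)
      (fun a => mul N (mt N s) (fun b => F (a, b)) z.2 - F (a, z.2)) z.1‖ ^ 2 +
        2 * ‖mul N (mt N t) (fun a => F (a, z.2)) z.1 - F z‖ ^ 2) := by
        refine Finset.sum_le_sum fun z _ => ?_
        rw [e z]
        generalize mul N (mt N t) _ _ = A
        generalize mul N (mt N t) _ _ - _ = B
        have h := norm_add_le A B
        have h0 := norm_nonneg (A + B)
        nlinarith [sq_nonneg (‖A‖ - ‖B‖)]
    _ ≤ _ := by
        rw [Finset.sum_add_distrib, Finset.sum_add_distrib, ← Finset.mul_sum, ← Finset.mul_sum]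
        linarith

lemma nnSum_eq (N : ℕ) [NeZero N] (f : Lat N → ℝ) :
    nnSum N f = ((N:ℝ)^2)⁻¹ * (2 * ∑ z, ((f (z + (1, 0)) - f z) ^ 2 + (f (z + (0, 1)) - f z) ^ 2)) := by
  have h : ∀ u : Lat N, ∑ z, (f (z - u) - f z) ^ 2 = ∑ z, (f (z + u) - f z) ^ 2 := by
    intro u
    rw [← Equiv.sum_comp (Equiv.addRight u)]
    refine Finset.sum_congr rfl fun z _ => ?_
    simp only [Equiv.coe_addRight, add_sub_cancel_right]
    ring
  unfold nnSum
  rw [← Finset.mul_sum]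
  congr 1
  simp_rw [Finset.sum_add_distrib]
  rw [h, h]
  ring

lemma D_le (N : ℕ) [NeZero N] (t s : ℝ) (ht0 : 0 ≤ t) (ht1 : t ≤ 1) (hs0 : 0 ≤ s) (hs1 : s ≤ 1)
    (f : Lat N → ℝ) :
    ∑ z, ((N:ℝ)^2)⁻¹ * ‖GG N t s (fun z => (f z : ℂ)) z - (f z : ℂ)‖ ^ 2 ≤ nnSum N f := by
  rw [nnSum_eq, ← Finset.mul_sum]
  gcongr
  have := GG_l2 N t s ht0 ht1 hs0 hs1 (fun z => (f z : ℂ))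
  simpa [← Complex.ofReal_sub, Complex.norm_real, sq_abs] using this

lemma ptwise (a b : ℂ) (p : ℝ) (hp : 2 ≤ p) :
    ‖a‖ ^ p ≤ 2 ^ p * ‖b‖ ^ p + 2 * (‖a - b‖ * ‖a‖ ^ (p - 1)) := by
  rcases le_total ‖a‖ (2 * ‖b‖) with h | h
  · have h1 : ‖a‖ ^ p ≤ (2 * ‖b‖) ^ p := Real.rpow_le_rpow (norm_nonneg _) h (by linarith)
    rw [Real.mul_rpow (by norm_num) (norm_nonneg _)] at h1
    have : 0 ≤ 2 * (‖a - b‖ * ‖a‖ ^ (p - 1)) := by positivity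
    linarith
  · have h1 : ‖a‖ ≤ 2 * ‖a - b‖ := by
      have : ‖a‖ ≤ ‖a - b‖ + ‖b‖ := by
        have := norm_add_le (a - b) b
        simpa using this
      linarith
    have h2 : ‖a‖ ^ p = ‖a‖ * ‖a‖ ^ (p - 1) := by
      rw [mul_comm, ← Real.rpow_add_one' (norm_nonneg _) (by linarith), sub_add_cancel]
    have h3 : ‖a‖ * ‖a‖ ^ (p - 1) ≤ 2 * ‖a - b‖ * ‖a‖ ^ (p - 1) := by gcongr
    have : 0 ≤ 2 ^ p * ‖b‖ ^ p := by positivity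
    rw [h2]
    linarith

lemma main_sum (N : ℕ) [NeZero N] (t s : ℝ) (ht0 : 0 ≤ t) (ht1 : t ≤ 1) (hs0 : 0 ≤ s)
    (hs1 : s ≤ 1) (f : Lat N → ℝ) (p : ℝ) (hp : 2 ≤ p) :
    ∑ z, ((N:ℝ)^2)⁻¹ * ‖GG N t s (fun z => (f z : ℂ)) z‖ ^ p ≤
      2 ^ p * ∑ z, ((N:ℝ)^2)⁻¹ * ‖f z‖ ^ p +
      2 * (nnSum N f ^ (1/2 : ℝ) *
        ((LL N ^ 2) ^ (2 * p - 2) * ∑ z, ((N:ℝ)^2)⁻¹ * ‖f z‖ ^ (2 * p - 2)) ^ (1/2 : ℝ)) := by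
  have hN : (0 : ℝ) < N := by exact_mod_cast NeZero.pos N
  set c := ((N:ℝ)^2)⁻¹ with hc
  have hc0 : 0 < c := by positivity
  set g := GG N t s (fun z => (f z : ℂ)) with hg
  have h1 : ∑ z, c * ‖g z‖ ^ p ≤ ∑ z, c * (2 ^ p * ‖f z‖ ^ p +
      2 * (‖g z - (f z : ℂ)‖ * ‖g z‖ ^ (p - 1))) := by
    refine Finset.sum_le_sum fun z _ => ?_
    gcongr
    have := ptwise (g z) (f z : ℂ) p hp
    rwa [Complex.norm_real] at this
  have h2 : ∑ z, c * (2 ^ p * ‖f z‖ ^ p + 2 * (‖g z - (f z : ℂ)‖ * ‖g z‖ ^ (p - 1)))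
      = 2 ^ p * ∑ z, c * ‖f z‖ ^ p +
        2 * ∑ z, (c ^ (1/2:ℝ) * ‖g z - (f z : ℂ)‖) * (c ^ (1/2:ℝ) * ‖g z‖ ^ (p - 1)) := by
    rw [Finset.mul_sum, Finset.mul_sum, ← Finset.sum_add_distrib]
    refine Finset.sum_congr rfl fun z _ => ?_
    have : c ^ (1/2:ℝ) * c ^ (1/2:ℝ) = c := by
      rw [← Real.rpow_add hc0]; norm_num
    linear_combination (-2 * ‖g z - (f z : ℂ)‖ * ‖g z‖ ^ (p - 1)) * this
  have h3 := Real.inner_le_Lp_mul_Lq_of_nonneg Finset.univ (p := 2) (q := 2)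
    (Real.holderConjugate_iff.mpr (by norm_num))
    (f := fun z => c ^ (1/2:ℝ) * ‖g z - (f z : ℂ)‖)
    (g := fun z => c ^ (1/2:ℝ) * ‖g z‖ ^ (p - 1))
    (fun z _ => by positivity) (fun z _ => by positivity)
  have e1 : ∀ z, (c ^ (1/2:ℝ) * ‖g z - (f z : ℂ)‖) ^ (2:ℝ) = c * ‖g z - (f z : ℂ)‖ ^ 2 := by
    intro z
    rw [Real.mul_rpow (by positivity) (by positivity), ← Real.rpow_mul hc0.le]
    norm_num
  have e2 : ∀ z, (c ^ (1/2:ℝ) * ‖g z‖ ^ (p - 1)) ^ (2:ℝ) = c * ‖g z‖ ^ (2 * p - 2) := by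
    intro z
    rw [Real.mul_rpow (by positivity) (by positivity), ← Real.rpow_mul hc0.le,
      ← Real.rpow_mul (norm_nonneg _)]
    norm_num
    left
    congr 1
    ring
  simp_rw [e1, e2] at h3
  have h4 := D_le N t s ht0 ht1 hs0 hs1 f
  have h5 : ∑ z, c * ‖g z‖ ^ (2 * p - 2) ≤
      (LL N ^ 2) ^ (2 * p - 2) * ∑ z, c * ‖f z‖ ^ (2 * p - 2) := by
    have := GG_lq N t s ht0 ht1 hs0 hs1 (fun z => (f z : ℂ)) (2 * p - 2) (by linarith)
    simp_rw [Complex.norm_real] at this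
    rw [← Finset.mul_sum, ← Finset.mul_sum, mul_left_comm]
    gcongr
  refine h1.trans ?_
  rw [h2]
  refine add_le_add le_rfl (mul_le_mul_of_nonneg_left (h3.trans ?_) (by norm_num))
  refine mul_le_mul (Real.rpow_le_rpow (by positivity) h4 (by norm_num))
    (Real.rpow_le_rpow (by positivity) h5 (by norm_num)) (by positivity) ?_
  exact Real.rpow_nonneg (le_trans (by positivity) h4) _

/-- small square -/
def Qs (N : ℕ) : Set (ℝ × ℝ) := Set.Icc (0 : ℝ) (1 / N) ×ˢ Set.Icc (0 : ℝ) (1 / N)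

/-- corner of a cell -/
def cor (N : ℕ) (z : Lat N) : ℝ × ℝ :=
  (((z.1.val : ℝ) - N) / N, ((z.2.val : ℝ) - N) / N)

lemma cover1 (N : ℕ) [NeZero N] (x : ℝ) (h1 : -1 ≤ x) (h2 : x ≤ 1) :
    ∃ a : ZMod (2*N), x - ((a.val : ℝ) - N) / N ∈ Set.Icc (0:ℝ) (1 / N) := by
  have hNn := NeZero.pos N
  have hN : (0 : ℝ) < N := by exact_mod_cast hNn
  have key : ∃ j : ℕ, j < 2 * N ∧ (j : ℝ) ≤ (x + 1) * N ∧ (x + 1) * N ≤ j + 1 := by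
    have hx : 0 ≤ (x + 1) * N := by
      apply mul_nonneg _ hN.le
      linarith
    by_cases h : ⌊(x + 1) * N⌋₊ < 2 * N
    · exact ⟨_, h, Nat.floor_le hx, (Nat.lt_floor_add_one _).le⟩
    · refine ⟨2 * N - 1, by omega, ?_, ?_⟩
      · refine le_trans ?_ (Nat.floor_le hx)
        exact_mod_cast (by omega)
      · rw [Nat.cast_sub (by omega)]
        push_cast
        nlinarith
  obtain ⟨j, hj, ha, hb⟩ := key
  refine ⟨(j : ZMod (2*N)), ?_⟩
  rw [ZMod.val_cast_of_lt hj]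
  have e : x - ((j:ℝ) - N) / N = ((x + 1) * N - j) / N := by
    field_simp
    ring
  rw [e]
  constructor
  · apply div_nonneg _ hN.le
    linarith
  · gcongr
    linarith

lemma lint_box (N : ℕ) [NeZero N] (Φ : ℝ × ℝ → ℝ≥0∞) (hΦ : Measurable Φ) (R : ℝ≥0∞)
    (hR : ∀ u ∈ Qs N, ∑ z : Lat N, Φ (cor N z + u) ≤ R) :
    ∫⁻ x in box, Φ x ≤ R * ENNReal.ofReal (((N:ℝ)^2)⁻¹) := by
  have hQ : MeasurableSet (Qs N) := measurableSet_Icc.prod measurableSet_Icc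
  have hsub : box ⊆ ⋃ z : Lat N, (fun u => u - cor N z) ⁻¹' Qs N := by
    rintro ⟨x, y⟩ ⟨hx, hy⟩
    obtain ⟨a, ha⟩ := cover1 N x hx.1 hx.2
    obtain ⟨b, hb⟩ := cover1 N y hy.1 hy.2
    exact Set.mem_iUnion.mpr ⟨(a, b), ha, hb⟩
  have h1 : ∀ z : Lat N, ∫⁻ x in (fun u => u - cor N z) ⁻¹' Qs N, Φ x
      = ∫⁻ u in Qs N, Φ (cor N z + u) := by
    intro z
    have := (measurePreserving_sub_right (volume : Measure (ℝ × ℝ)) (cor N z)).setLIntegral_comp_preimage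
      hQ (f := fun u => Φ (cor N z + u)) (hΦ.comp (measurable_const_add _))
    rw [← this]
    simp
  have hv : volume (Qs N) = ENNReal.ofReal (((N:ℝ)^2)⁻¹) := by
    unfold Qs
    rw [Measure.volume_eq_prod, Measure.prod_prod, Real.volume_Icc,
      ← ENNReal.ofReal_mul (by simp)]
    congr 1
    field_simp
    ring
  calc ∫⁻ x in box, Φ x ≤ ∫⁻ x in ⋃ z : Lat N, (fun u => u - cor N z) ⁻¹' Qs N, Φ x :=
        lintegral_mono_set hsub
    _ ≤ ∑' z : Lat N, ∫⁻ x in (fun u => u - cor N z) ⁻¹' Qs N, Φ x := lintegral_iUnion_le _ _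
    _ = ∑ z : Lat N, ∫⁻ u in Qs N, Φ (cor N z + u) := by
        rw [tsum_fintype]
        simp_rw [h1]
    _ = ∫⁻ u in Qs N, ∑ z : Lat N, Φ (cor N z + u) := by
        rw [lintegral_finsetSum]
        intro z _
        exact hΦ.comp (measurable_const_add _)
    _ ≤ ∫⁻ u in Qs N, R := setLIntegral_mono measurable_const hR
    _ = _ := by rw [setLIntegral_const, hv]

lemma Ex_cont (N : ℕ) [NeZero N] (F : Lat N → ℂ) : Continuous (Ex N F) := by
  unfold Ex eW
  fun_prop

lemma Ex_cell (N : ℕ) [NeZero N] (F : Lat N → ℂ) (p : ℝ) (u : ℝ × ℝ) :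
    ∑ z : Lat N, ‖Ex N F (cor N z + u)‖ ^ p = ∑ z, ‖GG N (N * u.1) (N * u.2) F z‖ ^ p := by
  have hN : (N : ℝ) ≠ 0 := by exact_mod_cast NeZero.ne N
  have h : ∀ z : Lat N, Ex N F (cor N z + u)
      = GG N (N * u.1) (N * u.2) F (z - ((N : ZMod (2*N)), (N : ZMod (2*N)))) := by
    intro z
    have := Ex_eq N F ((z.1.val : ℤ) - N) ((z.2.val : ℤ) - N) (N * u.1) (N * u.2)
    have e2 : (((((z.1.val : ℤ) - N : ℤ) : ZMod (2*N)), (((z.2.val : ℤ) - N : ℤ) : ZMod (2*N))) : Lat N)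
        = z - ((N : ZMod (2*N)), (N : ZMod (2*N))) := by
      ext <;> simp
    rw [e2] at this
    rw [← this]
    congr 1
    unfold cor
    ext
    · simp
      field_simp
    · simp
      field_simp
  simp_rw [h]
  exact Equiv.sum_comp (Equiv.subRight ((N : ZMod (2*N)), (N : ZMod (2*N))))
    (fun z => ‖GG N (N * u.1) (N * u.2) F z‖ ^ p)

lemma cLp_le (N : ℕ) [NeZero N] (F : Lat N → ℂ) (p : ℝ) (hp : 2 ≤ p) (A : ℝ)
    (hA : ∀ t s : ℝ, 0 ≤ t → t ≤ 1 → 0 ≤ s → s ≤ 1 →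
      ∑ z, ((N:ℝ)^2)⁻¹ * ‖GG N t s F z‖ ^ p ≤ A) :
    cLp (ENNReal.ofReal p) (Ex N F) ≤ ENNReal.ofReal (A ^ (1/p)) := by
  have hN : (0 : ℝ) < N := by exact_mod_cast NeZero.pos N
  have hp0 : 0 < p := by linarith
  have hA0 : 0 ≤ A := le_trans (by positivity) (hA 0 0 le_rfl zero_le_one le_rfl zero_le_one)
  unfold cLp
  rw [eLpNorm_eq_lintegral_rpow_enorm_toReal (by simpa using hp0) ENNReal.ofReal_ne_top,
    ENNReal.toReal_ofReal hp0.le, ← ENNReal.ofReal_rpow_of_nonneg hA0 (by positivity)]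
  refine ENNReal.rpow_le_rpow ?_ (by positivity)
  have := lint_box N (fun x => ‖Ex N F x‖ₑ ^ p)
    ((Ex_cont N F).measurable.enorm.pow_const p) (ENNReal.ofReal (A * (N:ℝ)^2)) ?_
  · refine this.trans (le_of_eq ?_)
    rw [← ENNReal.ofReal_mul (by positivity)]
    congr 1
    field_simp
  · intro u hu
    have e : ∀ z, ‖Ex N F (cor N z + u)‖ₑ ^ p = ENNReal.ofReal (‖Ex N F (cor N z + u)‖ ^ p) := by
      intro z
      rw [← ofReal_norm, ENNReal.ofReal_rpow_of_nonneg (norm_nonneg _) hp0.le]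
    simp_rw [e]
    rw [← ENNReal.ofReal_sum_of_nonneg (fun z _ => by positivity), Ex_cell]
    apply ENNReal.ofReal_le_ofReal
    obtain ⟨⟨h1, h2⟩, h3, h4⟩ := hu
    have h := hA (N * u.1) (N * u.2) (by positivity)
      (by rw [le_div_iff₀ hN] at h2; linarith) (by positivity)
      (by rw [le_div_iff₀ hN] at h4; linarith)
    rw [← Finset.mul_sum, inv_mul_le_iff₀ (by positivity)] at h
    linarith

/-- `‖Ex f‖_{L^p(𝕋²)} ≤ C‖f‖_{L^p(Λ_ε)} +
C ε^{-κ} ‖f‖_{L^{2p-2}(Λ_ε)}^{1-1/p} (Σ_{|x-y|=ε} ε²(f(y)-f(x))²)^{1/(2p)}`. -/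
theorem statement7 (p : ℝ) (hp : 2 ≤ p) (κ : ℝ) (hκ : 0 < κ) :
    ∃ C : ℝ, 0 < C ∧ ∀ (N : ℕ) [NeZero N], 2 ≤ N → ∀ f : Lat N → ℝ,
      cLp (ENNReal.ofReal p) (Ex N (fun z => ((f z : ℝ) : ℂ))) ≤
        ENNReal.ofReal (C * dLp N (ENNReal.ofReal p) f +
          C * (N : ℝ) ^ κ * (dLp N (ENNReal.ofReal (2*p - 2)) f) ^ (1 - 1/p) *
            (nnSum N f) ^ (1/(2*p))) := by
  set c0 : ℝ := (2 * (1 + 2 ^ (κ/2) / (κ/2)))^2 with hc0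
  have hc0p : 0 < c0 := by positivity
  refine ⟨2 + 2 * c0, by positivity, ?_⟩
  intro N _ _ f
  have hp0 : 0 < p := by linarith
  have hN : (0 : ℝ) < N := by exact_mod_cast NeZero.pos N
  refine (cLp_le N (fun z => ((f z : ℝ) : ℂ)) p hp _
    (fun t s a b c d => main_sum N t s a b c d f p hp)).trans ?_
  apply ENNReal.ofReal_le_ofReal
  have hD : 0 ≤ nnSum N f := by
    unfold nnSum
    positivity
  unfold dLp
  rw [if_neg ENNReal.ofReal_ne_top, if_neg ENNReal.ofReal_ne_top, ENNReal.toReal_ofReal hp0.le,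
    ENNReal.toReal_ofReal (by linarith)]
  have hX : 0 ≤ ∑ z, ((N:ℝ)^2)⁻¹ * ‖f z‖ ^ p := by positivity
  have hY : 0 ≤ ∑ z, ((N:ℝ)^2)⁻¹ * ‖f z‖ ^ (2 * p - 2) := by positivity
  generalize (∑ z, ((N:ℝ)^2)⁻¹ * ‖f z‖ ^ p) = X at *
  generalize (∑ z, ((N:ℝ)^2)⁻¹ * ‖f z‖ ^ (2 * p - 2)) = Y at *
  generalize nnSum N f = D at *
  have hL1 := LL_one N
  have hL1' : 1 ≤ LL N ^ 2 := one_le_pow₀ hL1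
  have hL2 := LL_le N κ hκ
  rw [← hc0] at hL2
  generalize LL N ^ 2 = Λ at *
  have hΛ : 0 < Λ := by linarith
  have e1 : (Y ^ (1 / (2 * p - 2))) ^ (1 - 1 / p) = Y ^ (1 / (2 * p)) := by
    rw [← Real.rpow_mul hY]
    congr 1
    have : 2 * p - 2 ≠ 0 := by linarith
    have : p - 1 ≠ 0 := by linarith
    have : p ≠ 0 := by linarith
    rw [show 2 * p - 2 = 2 * (p - 1) by ring]
    field_simp
  rw [e1]
  have hi1 : 1 / p ≤ 1 := by rw [div_le_one hp0]; linarith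
  refine (Real.rpow_add_le_add_rpow (by positivity) (by positivity) (by positivity) hi1).trans ?_
  have e2 : (2 ^ p * X) ^ (1 / p) = 2 * X ^ (1 / p) := by
    rw [Real.mul_rpow (by positivity) hX, ← Real.rpow_mul (by norm_num), mul_one_div_cancel hp0.ne',
      Real.rpow_one]
  have e3 : (2 * (D ^ (1/2 : ℝ) * (Λ ^ (2 * p - 2) * Y) ^ (1/2 : ℝ))) ^ (1 / p)
      = (2 ^ (1 / p) * Λ ^ (1 - 1 / p)) * Y ^ (1 / (2 * p)) * D ^ (1 / (2 * p)) := by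
    rw [Real.mul_rpow (by positivity) (by positivity),
      Real.mul_rpow (by positivity) (by positivity),
      Real.mul_rpow (by positivity) (by positivity),
      Real.mul_rpow (by positivity) (by positivity),
      ← Real.rpow_mul hD, ← Real.rpow_mul hY, ← Real.rpow_mul hΛ.le, ← Real.rpow_mul hΛ.le]
    have a1 : (1/2 : ℝ) * (1 / p) = 1 / (2 * p) := by field_simp
    have a2 : (2 * p - 2) * (1/2 : ℝ) * (1 / p) = 1 - 1 / p := by field_simp
    rw [a1, a2]
    ring
  rw [e2, e3]
  have b1 : (2:ℝ) ^ (1 / p) ≤ 2 := by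
    calc (2:ℝ) ^ (1 / p) ≤ 2 ^ (1:ℝ) := Real.rpow_le_rpow_of_exponent_le (by norm_num) hi1
      _ = 2 := Real.rpow_one 2
  have b2 : Λ ^ (1 - 1 / p) ≤ c0 * (N:ℝ) ^ κ := by
    refine le_trans ?_ hL2
    calc Λ ^ (1 - 1 / p) ≤ Λ ^ (1:ℝ) := Real.rpow_le_rpow_of_exponent_le hL1'
          (by have : 0 ≤ 1 / p := by positivity
              linarith)
      _ = Λ := Real.rpow_one Λ
  have b3 : 2 ^ (1 / p) * Λ ^ (1 - 1 / p) ≤ (2 + 2 * c0) * (N:ℝ) ^ κ := by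
    calc 2 ^ (1 / p) * Λ ^ (1 - 1 / p) ≤ 2 * (c0 * (N:ℝ) ^ κ) := by gcongr
      _ ≤ _ := by
        have : 0 ≤ (N:ℝ) ^ κ := by positivity
        nlinarith
  gcongr
  linarith

end IsingKac
end
end

section
/- Let λ > 1, c₁, c₂ > 0, T > 0, and let f: [0,T] → [0,∞) be differentiable and satisfy f′(t) + 2c₁ f(t)^λ ≤ c₂ for all t ∈ [0,T]. Then for all t ∈ [0,T]: f(t) ≤ max( f(0) / (1 + c₁(λ−1) t f(0)^{λ−1})^{1/(λ−1)}, (c₂/c₁)^{1/λ} ); in particular, for t > 0, f(t) ≤ max( (c₁(λ−1)t)^{−1/(λ−1)}, (c₂/c₁)^{1/λ} ). -/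
open scoped BigOperators ENNReal
open MeasureTheory

noncomputable section

namespace IsingKac

open scoped NNReal

/-- comparison test for the ODE inequality `f' + 2c₁ f^λ ≤ c₂`. -/
theorem statement13 (lam c₁ c₂ T : ℝ) (hlam : 1 < lam) (hc₁ : 0 < c₁) (hc₂ : 0 < c₂)
    (hT : 0 < T) (f f' : ℝ → ℝ)
    (hpos : ∀ t ∈ Set.Icc (0:ℝ) T, 0 ≤ f t)
    (hderiv : ∀ t ∈ Set.Icc (0:ℝ) T, HasDerivWithinAt f (f' t) (Set.Icc (0:ℝ) T) t)
    (hineq : ∀ t ∈ Set.Icc (0:ℝ) T, f' t + 2*c₁ * (f t) ^ lam ≤ c₂) :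
    ∀ t ∈ Set.Icc (0:ℝ) T,
      f t ≤ max (f 0 / (1 + c₁*(lam-1)*t*(f 0) ^ (lam-1)) ^ (1/(lam-1))) ((c₂/c₁) ^ (1/lam)) ∧
      (0 < t → f t ≤ max ((c₁*(lam-1)*t) ^ (-(1/(lam-1)))) ((c₂/c₁) ^ (1/lam))) := by
  have hM : 0 < (c₂/c₁) ^ (1/lam) := Real.rpow_pos_of_pos (div_pos hc₂ hc₁) _
  have hMl : ((c₂/c₁) ^ (1/lam)) ^ lam = c₂/c₁ := by
    rw [← Real.rpow_mul (div_pos hc₂ hc₁).le, one_div, inv_mul_cancel₀ (by linarith), Real.rpow_one]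
  set M := (c₂/c₁) ^ (1/lam) with hMdef
  have hmu : 0 < lam - 1 := by linarith
  have hcont : ContinuousOn f (Set.Icc 0 T) := fun s hs => (hderiv s hs).continuousWithinAt
  have hright : ∀ s ∈ Set.Ico (0:ℝ) T, HasDerivWithinAt f (f' s) (Set.Ici s) s := by
    intro s hs
    refine (hderiv s ⟨hs.1, hs.2.le⟩).mono_of_mem_nhdsWithin ?_
    exact Filter.mem_of_superset (Icc_mem_nhdsGE hs.2) (Set.Icc_subset_Icc_left hs.1)
  -- above the threshold `M`
  have hup : ∀ s ∈ Set.Icc (0:ℝ) T, M ≤ f s → f' s ≤ -(c₁ * f s ^ lam) := by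
    intro s hs h
    have h1 : M ^ lam ≤ f s ^ lam := Real.rpow_le_rpow hM.le h (by linarith)
    rw [hMl, div_le_iff₀ hc₁] at h1
    have := hineq s hs
    nlinarith
  intro t ht
  by_cases hft : f t ≤ M
  · exact ⟨le_max_of_le_right hft, fun _ => le_max_of_le_right hft⟩
  push Not at hft
  have habove : ∀ s ∈ Set.Icc (0:ℝ) t, M < f s := by
    intro s hs
    by_contra! hc
    have := image_le_of_deriv_right_lt_deriv_boundary (f := f) (f' := f') (a := s) (b := t)
      (B := fun _ => M) (B' := fun _ => 0)
      (hcont.mono (Set.Icc_subset_Icc hs.1 ht.2))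
      (fun x hx => hright x ⟨hs.1.trans hx.1, hx.2.trans_le ht.2⟩) hc
      (fun x => hasDerivAt_const x M)
      (fun x hx he => by
        have he' : f x = M := he
        have h1 := hup x ⟨hs.1.trans hx.1, hx.2.le.trans ht.2⟩ he'.ge
        have h2 : 0 < f x ^ lam := Real.rpow_pos_of_pos (he' ▸ hM) _
        have := mul_pos hc₁ h2
        linarith)
      (Set.right_mem_Icc.2 hs.2)
    exact absurd hft (not_lt.2 this)
  have hp : ∀ s ∈ Set.Icc (0:ℝ) t, 0 < f s := fun s hs => hM.trans (habove s hs)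
  have key : c₁*(lam-1)*t - f t ^ (-(lam-1)) ≤ - f 0 ^ (-(lam-1)) := by
    refine image_le_of_deriv_right_le_deriv_boundary
      (f := fun s => c₁*(lam-1)*s - f s ^ (-(lam-1)))
      (f' := fun s => c₁*(lam-1)*1 - f' s * (-(lam-1)) * f s ^ (-(lam-1) - 1)) (a := 0) (b := t)
      (B := fun _ => - f 0 ^ (-(lam-1))) (B' := fun _ => 0) ?_ ?_ (by simp)
      continuousOn_const (fun x _ => hasDerivWithinAt_const ..) ?_ (Set.right_mem_Icc.2 ht.1)
    · refine ContinuousOn.sub (by fun_prop) ?_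
      exact (hcont.mono (Set.Icc_subset_Icc_right ht.2)).rpow_const
        (fun x hx => Or.inl (hp x hx).ne')
    · intro x hx
      exact ((hasDerivWithinAt_id x _).const_mul _).sub
        ((hright x ⟨hx.1, hx.2.trans_le ht.2⟩).rpow_const (Or.inl (hp x ⟨hx.1, hx.2.le⟩).ne'))
    · intro x hx
      have hx0 := hp x ⟨hx.1, hx.2.le⟩
      have h1 := hup x ⟨hx.1, hx.2.le.trans ht.2⟩ (habove x ⟨hx.1, hx.2.le⟩).le
      have e : -(lam-1) - 1 = -lam := by ring
      have h3 : f x ^ lam * f x ^ (-lam) = 1 := by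
        rw [← Real.rpow_add hx0]; simp
      have h4 : 0 < f x ^ (-lam) := Real.rpow_pos_of_pos hx0 _
      have h5 : f' x * f x ^ (-lam) ≤ -c₁ := by
        calc f' x * f x ^ (-lam) ≤ -(c₁ * f x ^ lam) * f x ^ (-lam) :=
              mul_le_mul_of_nonneg_right h1 h4.le
          _ = -c₁ * (f x ^ lam * f x ^ (-lam)) := by ring
          _ = -c₁ := by rw [h3, mul_one]
      simp only [e]
      nlinarith
  have h0 : 0 < f 0 := hp 0 ⟨le_rfl, ht.1⟩
  have hb : 0 < f t := hp t ⟨ht.1, le_rfl⟩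
  have hK : 0 < c₁*(lam-1) := mul_pos hc₁ hmu
  constructor
  · apply le_max_of_le_left
    have ha : 0 < f 0 ^ (lam-1) := Real.rpow_pos_of_pos h0 _
    have hD : 0 < 1 + c₁*(lam-1)*t*(f 0) ^ (lam-1) := by
      have := mul_nonneg (mul_nonneg hK.le ht.1) ha.le
      linarith
    have h6 : 1 + c₁*(lam-1)*t*(f 0) ^ (lam-1) ≤ (f 0 / f t) ^ (lam-1) := by
      rw [Real.div_rpow h0.le hb.le, div_eq_mul_inv, ← Real.rpow_neg hb.le]
      have h7 : f 0 ^ (-(lam-1)) * f 0 ^ (lam-1) = 1 := by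
        rw [← Real.rpow_add h0]; simp
      nlinarith
    have h8 := Real.rpow_le_rpow hD.le h6 (one_div_pos.2 hmu).le
    rw [← Real.rpow_mul (div_pos h0 hb).le, mul_one_div_cancel hmu.ne', Real.rpow_one,
      le_div_iff₀ hb] at h8
    rw [le_div_iff₀ (Real.rpow_pos_of_pos hD _)]
    linarith
  · intro htp
    apply le_max_of_le_left
    have h9 : c₁*(lam-1)*t ≤ f t ^ (-(lam-1)) := by
      have := Real.rpow_pos_of_pos h0 (-(lam-1))
      linarith
    have h10 := Real.rpow_le_rpow_of_nonpos (mul_pos hK htp) h9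
      (neg_nonpos.2 (one_div_pos.2 hmu).le)
    rwa [← Real.rpow_mul hb.le, neg_mul_neg, mul_one_div_cancel hmu.ne', Real.rpow_one] at h10

end IsingKac
end
end

section
/- For every even integer p ≥ 2 and every j ∈ ℕ there exists a constant C = C(p,j) > 0 such that for all real numbers a, b and all λ > 0: |a^{p−1+j} − b^{p−1+j}| ≤ λ |a^{p−1} − b^{p−1}| |a − b| + (C/λ) ( |a|^{p−2+2j} + |b|^{p−2+2j} ). -/
open scoped BigOperators ENNReal
open MeasureTheory

noncomputable section

namespace IsingKac

open scoped NNReal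

/-- generalised Young-type bound
`|a^{p-1+j} - b^{p-1+j}| ≤ λ|a^{p-1}-b^{p-1}||a-b| + (C/λ)(|a|^{p-2+2j}+|b|^{p-2+2j})`. -/
theorem statement15 (p j : ℕ) (hp : Even p) (hp2 : 2 ≤ p) :
    ∃ C : ℝ, 0 < C ∧ ∀ a b lam : ℝ, 0 < lam →
      |a^(p-1+j) - b^(p-1+j)| ≤
        lam * |a^(p-1) - b^(p-1)| * |a - b| + (C/lam) * (|a|^(p-2+2*j) + |b|^(p-2+2*j)) := by
  obtain ⟨r, hr⟩ := hp
  obtain ⟨m, rfl⟩ : ∃ m, r = m + 1 := ⟨r - 1, by omega⟩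
  subst hr
  have e1 : m + 1 + (m + 1) - 1 = 2 * m + 1 := by omega
  have e2 : m + 1 + (m + 1) - 2 = 2 * m := by omega
  rw [e1, e2]
  set n := 2 * m + 1 + j with hn
  have hnpos : (0 : ℝ) < n := by
    have : 0 < n := by omega
    exact_mod_cast this
  refine ⟨2 * (n : ℝ) ^ 2, by positivity, ?_⟩
  intro a b lam hlam
  set M := max |a| |b| with hM
  have hM0 : 0 ≤ M := le_max_of_le_left (abs_nonneg a)
  have hV : ∀ k : ℕ, M ^ k ≤ |a| ^ k + |b| ^ k := by
    intro k
    have ha : 0 ≤ |a| ^ k := by positivity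
    have hb : 0 ≤ |b| ^ k := by positivity
    rcases max_choice |a| |b| with h | h <;> rw [hM, h] <;> linarith
  have hX : |a ^ n - b ^ n| ≤ |a - b| * n * M ^ (n - 1) := abs_pow_sub_pow_le a b n
  have hU : |a - b| ^ 2 * M ^ (2 * m) ≤ 2 * (|a ^ (2 * m + 1) - b ^ (2 * m + 1)| * |a - b|) := by
    have h1 : 0 ≤ (a ^ 2 - b ^ 2) * ((a ^ 2) ^ m - (b ^ 2) ^ m) := by
      rcases le_total (a ^ 2) (b ^ 2) with h | h
      · have := pow_le_pow_left₀ (sq_nonneg a) h m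
        exact mul_nonneg_of_nonpos_of_nonpos (by linarith) (by linarith)
      · have := pow_le_pow_left₀ (sq_nonneg b) h m
        exact mul_nonneg (by linarith) (by linarith)
    rw [← pow_mul, ← pow_mul] at h1
    have h2 := hV (2 * m)
    rw [(even_two_mul m).pow_abs, (even_two_mul m).pow_abs] at h2
    rw [← abs_mul, sq_abs]
    have h3 := le_abs_self ((a ^ (2 * m + 1) - b ^ (2 * m + 1)) * (a - b))
    have h4 := mul_le_mul_of_nonneg_left h2 (sq_nonneg (a - b))
    have h5 : 2 * ((a ^ (2 * m + 1) - b ^ (2 * m + 1)) * (a - b)) =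
        (a - b) ^ 2 * (a ^ (2 * m) + b ^ (2 * m)) +
          (a ^ 2 - b ^ 2) * (a ^ (2 * m) - b ^ (2 * m)) := by ring
    linarith
  have hV' := hV (2 * m + 2 * j)
  rw [mul_assoc lam]
  set U := |a ^ (2 * m + 1) - b ^ (2 * m + 1)| * |a - b| with hUdef
  set V := |a| ^ (2 * m + 2 * j) + |b| ^ (2 * m + 2 * j) with hVdef
  have hU0 : 0 ≤ U := by positivity
  have hV0 : 0 ≤ V := by positivity
  have key : |a ^ n - b ^ n| ^ 2 ≤ 2 * (n : ℝ) ^ 2 * (U * V) := by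
    calc |a ^ n - b ^ n| ^ 2 ≤ (|a - b| * n * M ^ (n - 1)) ^ 2 :=
          pow_le_pow_left₀ (abs_nonneg _) hX 2
      _ = (n : ℝ) ^ 2 * ((|a - b| ^ 2 * M ^ (2 * m)) * M ^ (2 * m + 2 * j)) := by
          have : n - 1 = 2 * m + j := by omega
          rw [this]; ring
      _ ≤ (n : ℝ) ^ 2 * ((2 * U) * V) := by gcongr
      _ = _ := by ring
  refine (pow_le_pow_iff_left₀ (abs_nonneg _) (by positivity) two_ne_zero).1 ?_
  have h6 : lam * U * (2 * (n : ℝ) ^ 2 / lam * V) = 2 * (n : ℝ) ^ 2 * (U * V) := by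
    field_simp
  have h7 : 0 ≤ 2 * (n : ℝ) ^ 2 * (U * V) := by positivity
  nlinarith [sq_nonneg (lam * U), sq_nonneg (2 * (n : ℝ) ^ 2 / lam * V)]

end IsingKac
end
end

section
/- Let G be a finite abelian group, k: G → [0,∞) an even function (k(−z) = k(z) for all z) with Σ_{z∈G} k(z) = 1, h: G → ℝ any function, and φ, ψ: ℝ → ℝ nondecreasing functions. Then Σ_{x∈G} φ(h(x)) Σ_{y∈G} k(x−y) ψ(h(y)) ≤ Σ_{x∈G} φ(h(x)) ψ(h(x)). In particular, for p even and β > 0, ⟨h^{p−1}, k ∗ tanh(βh)⟩ ≤ ⟨h^{p−1}, tanh(βh)⟩. -/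
open scoped BigOperators ENNReal
open MeasureTheory

noncomputable section

namespace IsingKac

open scoped NNReal

/-- convolution/rearrangement inequality for monotone images of a field on a
finite abelian group, and its `tanh` consequence. -/
theorem statement16 {G : Type*} [AddCommGroup G] [Fintype G] (k : G → ℝ)
    (hk0 : ∀ z, 0 ≤ k z) (hke : ∀ z, k (-z) = k z) (hk1 : (∑ z : G, k z) = 1)
    (h : G → ℝ) :
    (∀ φ ψ : ℝ → ℝ, Monotone φ → Monotone ψ →
      (∑ x : G, φ (h x) * ∑ y : G, k (x - y) * ψ (h y)) ≤ ∑ x : G, φ (h x) * ψ (h x)) ∧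
    (∀ p : ℕ, Even p → ∀ β : ℝ, 0 < β →
      (∑ x : G, (h x)^(p-1) * ∑ y : G, k (x - y) * Real.tanh (β * h y)) ≤
        ∑ x : G, (h x)^(p-1) * Real.tanh (β * h x)) := by
  have main : ∀ φ ψ : ℝ → ℝ, Monotone φ → Monotone ψ →
      (∑ x : G, φ (h x) * ∑ y : G, k (x - y) * ψ (h y)) ≤ ∑ x : G, φ (h x) * ψ (h x) := by
    intro φ ψ hφ hψ
    have r1 : ∀ x : G, ∑ y : G, k (x - y) = 1 := fun x => by
      rw [← hk1]; exact Equiv.sum_comp (Equiv.subLeft x) k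
    have r2 : ∀ y : G, ∑ x : G, k (x - y) = 1 := fun y => by
      rw [← hk1]; exact Equiv.sum_comp (Equiv.subRight y) k
    have hS : 0 ≤ ∑ x : G, ∑ y : G,
        k (x - y) * ((φ (h x) - φ (h y)) * (ψ (h x) - ψ (h y))) := by
      refine Finset.sum_nonneg fun x _ => Finset.sum_nonneg fun y _ =>
        mul_nonneg (hk0 _) ?_
      rcases le_total (h x) (h y) with hxy | hxy
      · exact mul_nonneg_of_nonpos_of_nonpos (sub_nonpos.2 (hφ hxy)) (sub_nonpos.2 (hψ hxy))
      · exact mul_nonneg (sub_nonneg.2 (hφ hxy)) (sub_nonneg.2 (hψ hxy))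
    have eA : ∑ x : G, ∑ y : G, k (x - y) * (φ (h x) * ψ (h x))
        = ∑ x : G, φ (h x) * ψ (h x) :=
      Finset.sum_congr rfl fun x _ => by rw [← Finset.sum_mul, r1, one_mul]
    have eB : ∑ x : G, ∑ y : G, k (x - y) * (φ (h y) * ψ (h y))
        = ∑ x : G, φ (h x) * ψ (h x) := by
      rw [Finset.sum_comm]
      exact Finset.sum_congr rfl fun x _ => by rw [← Finset.sum_mul, r2, one_mul]
    have eC : ∑ x : G, ∑ y : G, k (x - y) * (φ (h x) * ψ (h y))
        = ∑ x : G, φ (h x) * ∑ y : G, k (x - y) * ψ (h y) :=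
      Finset.sum_congr rfl fun x _ => by
        rw [Finset.mul_sum]
        exact Finset.sum_congr rfl fun y _ => by ring
    have eD : ∑ x : G, ∑ y : G, k (x - y) * (φ (h y) * ψ (h x))
        = ∑ x : G, φ (h x) * ∑ y : G, k (x - y) * ψ (h y) := by
      rw [Finset.sum_comm, ← eC]
      refine Finset.sum_congr rfl fun x _ => Finset.sum_congr rfl fun y _ => ?_
      rw [← hke (y - x), neg_sub]
    have e : ∑ x : G, ∑ y : G, k (x - y) * ((φ (h x) - φ (h y)) * (ψ (h x) - ψ (h y)))
        = (∑ x : G, ∑ y : G, k (x - y) * (φ (h x) * ψ (h x)))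
        + (∑ x : G, ∑ y : G, k (x - y) * (φ (h y) * ψ (h y)))
        - (∑ x : G, ∑ y : G, k (x - y) * (φ (h x) * ψ (h y)))
        - (∑ x : G, ∑ y : G, k (x - y) * (φ (h y) * ψ (h x))) := by
      simp only [← Finset.sum_add_distrib, ← Finset.sum_sub_distrib]
      refine Finset.sum_congr rfl fun x _ => Finset.sum_congr rfl fun y _ => ?_
      ring
    rw [e, eA, eB, eC, eD] at hS
    linarith
  refine ⟨main, fun p hp β hβ => ?_⟩
  have hpow : Monotone (fun t : ℝ => t ^ (p - 1)) := by
    rcases Nat.eq_zero_or_pos p with rfl | hpos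
    · intro a b _
      simp
    · exact (Nat.Even.sub_odd hpos hp odd_one).strictMono_pow.monotone
  have htanh : Monotone (fun t : ℝ => Real.tanh (β * t)) := by
    intro a b hab
    have hab' : β * a ≤ β * b := mul_le_mul_of_nonneg_left hab hβ.le
    have hs : 0 ≤ Real.sinh (β * b - β * a) := Real.sinh_nonneg_iff.2 (sub_nonneg.2 hab')
    rw [Real.sinh_sub] at hs
    change Real.tanh (β * a) ≤ Real.tanh (β * b)
    rw [Real.tanh_eq_sinh_div_cosh, Real.tanh_eq_sinh_div_cosh,
      div_le_div_iff₀ (Real.cosh_pos _) (Real.cosh_pos _)]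
    linarith
  exact main _ _ hpow htanh

end IsingKac
end
end
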